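/- Let n, p, K be positive integers, X ∈ ℝ^{n×p}, Y ∈ ℝ^{n×K}, λ > 0, and S ⊆ {1,…,p}. Define the objective f(B) = (1/(2n))‖Y − XB‖_F² + λ Σ_{i=1}^p ‖β_i‖₂ for B ∈ ℝ^{p×K} with rows β_i, where ‖·‖_F is the Frobenius norm. Suppose B̂ ∈ ℝ^{p×K} satisfies: (i) β̂_j = 0 for all j ∉ S; (ii) β̂_i ≠ 0 for all i ∈ S; (iii) for every i ∈ S, the i-th row of (1/n)Xᵀ(XB̂ − Y) equals −λ β̂_i/‖β̂_i‖₂; and (iv) for every j ∉ S, the j-th row of (1/n)Xᵀ(XB̂ − Y) has Euclidean norm strictly less than λ. Then B̂ is a global minimizer of f over ℝ^{p×K}, and the set of nonzero rows of B̂ is exactly S. If moreover the matrix X_Sᵀ X_S (the Gram matrix of the columns of X indexed by S) is positive definite, then B̂ is the unique global minimizer of f. -/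

import Mathlib

open Matrix

/-!
Write `G = (1/n) Xᵀ(X B̂ - Y)` for the gradient of the quadratic loss at `B̂`. Expanding the square
gives the exact identity (`objective_sub`)
`f B - f B̂ = (1/(2n)) ‖X (B - B̂)‖² + ∑ i, (⟨G i, B i - B̂ i⟩ + λ (‖B i‖ - ‖B̂ i‖))`.
Conditions on the rows of `G` say that `-G i / λ` is a subgradient of the Euclidean norm at `B̂ i`,
so by Cauchy-Schwarz each summand is nonnegative, and off `S` it is positive unless `B i = 0`.
Hence `B̂` is a minimizer. If `B` does equally well, then `B` vanishes off `S` and `X (B - B̂) = 0`,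
so each column of `B - B̂`, restricted to `S`, lies in the kernel of the Gram matrix of `X_S`.
-/

/-- Second-order expansion of the objective at `C`; it is exact because the loss is quadratic. -/
lemma objective_sub {n p K : ℕ} (hn : 0 < n)
    (X : Matrix (Fin n) (Fin p) ℝ) (Y : Matrix (Fin n) (Fin K) ℝ) (lam : ℝ)
    (B C : Matrix (Fin p) (Fin K) ℝ) :
    ((1 / (2 * n)) * ∑ a, ∑ k, (Y a k - (X * B) a k) ^ 2
        + lam * ∑ i, Real.sqrt (∑ k, B i k ^ 2))
      - ((1 / (2 * n)) * ∑ a, ∑ k, (Y a k - (X * C) a k) ^ 2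
        + lam * ∑ i, Real.sqrt (∑ k, C i k ^ 2))
    = (1 / (2 * n)) * ∑ a, ∑ k, ((X * (B - C)) a k) ^ 2
      + ∑ i, (∑ k, ((1 / (n : ℝ)) * (Xᵀ * (X * C - Y)) i k) * (B i k - C i k)
        + lam * (Real.sqrt (∑ k, B i k ^ 2) - Real.sqrt (∑ k, C i k ^ 2))) := by
  have hn' : (n : ℝ) ≠ 0 := by exact_mod_cast hn.ne'
  -- Transposition moves `X` across the Frobenius inner product.
  have hadj : ∑ i, ∑ k, (Xᵀ * (X * C - Y)) i k * (B i k - C i k)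
      = ∑ a, ∑ k, (X * C - Y) a k * (X * (B - C)) a k := by
    simp only [Matrix.mul_apply (M := Xᵀ), Matrix.mul_apply (M := X) (N := B - C),
      Matrix.transpose_apply, Matrix.sub_apply B C, Finset.sum_mul, Finset.mul_sum]
    calc _ = ∑ i, ∑ a, ∑ k, X a i * (X * C - Y) a k * (B i k - C i k) :=
          Finset.sum_congr rfl fun _ _ => Finset.sum_comm
      _ = ∑ a, ∑ i, ∑ k, X a i * (X * C - Y) a k * (B i k - C i k) := Finset.sum_comm
      _ = ∑ a, ∑ k, ∑ i, X a i * (X * C - Y) a k * (B i k - C i k) :=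
          Finset.sum_congr rfl fun _ _ => Finset.sum_comm
      _ = _ := by
          refine Finset.sum_congr rfl fun _ _ => Finset.sum_congr rfl fun _ _ =>
            Finset.sum_congr rfl fun _ _ => by ring
  have hexp : ∑ a, ∑ k, (Y a k - (X * B) a k) ^ 2
      = ∑ a, ∑ k, (Y a k - (X * C) a k) ^ 2
        + 2 * ∑ a, ∑ k, (X * C - Y) a k * (X * (B - C)) a k
        + ∑ a, ∑ k, ((X * (B - C)) a k) ^ 2 := by
    simp only [Finset.mul_sum, ← Finset.sum_add_distrib]
    refine Finset.sum_congr rfl fun _ _ => Finset.sum_congr rfl fun _ _ => ?_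
    rw [Matrix.mul_sub]
    simp only [Matrix.sub_apply]
    ring
  have hlin : ∑ i, ∑ k, ((1 / (n : ℝ)) * (Xᵀ * (X * C - Y)) i k) * (B i k - C i k)
      = (1 / (n : ℝ)) * ∑ i, ∑ k, (Xᵀ * (X * C - Y)) i k * (B i k - C i k) := by
    simp only [Finset.mul_sum, mul_assoc]
  rw [Finset.sum_add_distrib, ← Finset.mul_sum, Finset.sum_sub_distrib, hlin, hadj, hexp]
  field_simp
  ring

/-- At a nonzero vector `c`, the Euclidean norm has subgradient `c / ‖c‖`; here `g` is `-lam` times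
that subgradient. -/
lemma row_nonneg_of_stat {K : ℕ} {lam : ℝ} (hlam : 0 < lam) (g b c : Fin K → ℝ)
    (hc : ∃ k, c k ≠ 0) (hg : ∀ k, g k = -lam * c k / Real.sqrt (∑ l, c l ^ 2)) :
    0 ≤ ∑ k, g k * (b k - c k)
      + lam * (Real.sqrt (∑ k, b k ^ 2) - Real.sqrt (∑ k, c k ^ 2)) := by
  obtain ⟨k₀, hk₀⟩ := hc
  have hpos : 0 < ∑ l, c l ^ 2 :=
    Finset.sum_pos' (fun _ _ => sq_nonneg _) ⟨k₀, Finset.mem_univ _, by positivity⟩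
  set r := Real.sqrt (∑ l, c l ^ 2) with hr
  have hrpos : 0 < r := Real.sqrt_pos.2 hpos
  have hrr : r * r = ∑ l, c l ^ 2 := Real.mul_self_sqrt hpos.le
  have hcs := Real.sum_mul_le_sqrt_mul_sqrt Finset.univ c b
  rw [← hr] at hcs
  have hsum : ∑ k, g k * (b k - c k) = lam / r * (r * r - ∑ k, c k * b k) := by
    rw [hrr, ← Finset.sum_sub_distrib, Finset.mul_sum]
    refine Finset.sum_congr rfl fun k _ => ?_
    rw [hg]
    ring
  have hkey : lam / r * (r * r - ∑ k, c k * b k) + lam * (Real.sqrt (∑ k, b k ^ 2) - r)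
      = lam / r * (r * Real.sqrt (∑ k, b k ^ 2) - ∑ k, c k * b k) := by
    field_simp
    ring
  rw [hsum, hkey]
  exact mul_nonneg (by positivity) (sub_nonneg.2 hcs)

/-- Off `S`, where `B̂` has a zero row, the first factor on the left is the gap in strict dual
feasibility, so this bound controls the norm of the competing row `b`. -/
lemma row_lower_bound (K : ℕ) (lam : ℝ) (g b : Fin K → ℝ) :
    (lam - Real.sqrt (∑ k, g k ^ 2)) * Real.sqrt (∑ k, b k ^ 2)
      ≤ ∑ k, g k * b k + lam * Real.sqrt (∑ k, b k ^ 2) := by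
  have h := Real.sum_mul_le_sqrt_mul_sqrt Finset.univ (fun k => -g k) b
  simp only [neg_sq, neg_mul, Finset.sum_neg_distrib] at h
  linarith

/-- A matrix with zero rows off `S` in the kernel of `X` is zero when `X_Sᵀ X_S` is definite. -/
lemma eq_zero_of_gram_posDef {n p K : ℕ} (X : Matrix (Fin n) (Fin p) ℝ) (S : Finset (Fin p))
    (hX : Matrix.PosDef fun (i j : {x // x ∈ S}) => ∑ a, X a i.1 * X a j.1)
    (D : Matrix (Fin p) (Fin K) ℝ) (hD : ∀ j ∉ S, ∀ k, D j k = 0)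
    (hXD : ∀ a k, (X * D) a k = 0) : D = 0 := by
  have hcol : ∀ k, (fun i : {x // x ∈ S} => D i.1 k) = 0 := by
    intro k
    by_contra hne
    have hpos := hX.dotProduct_mulVec_pos hne
    have hXS : ∀ a, ∑ j : {x // x ∈ S}, X a j.1 * D j.1 k = 0 := by
      intro a
      rw [← hXD a k, Matrix.mul_apply, Finset.sum_coe_sort S fun j => X a j * D j k]
      exact Finset.sum_subset (Finset.subset_univ S) fun j _ hj => by rw [hD j hj, mul_zero]
    have hker : (Matrix.mulVec (fun (i j : {x // x ∈ S}) => ∑ a, X a i.1 * X a j.1)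
        fun i : {x // x ∈ S} => D i.1 k) = 0 := by
      funext i
      simp only [Matrix.mulVec, dotProduct, Finset.sum_mul, Pi.zero_apply]
      rw [Finset.sum_comm]
      refine Finset.sum_eq_zero fun a _ => ?_
      simp only [mul_assoc, ← Finset.mul_sum, hXS, mul_zero]
    rw [hker, dotProduct_zero] at hpos
    exact hpos.false
  ext i k
  by_cases hi : i ∈ S
  · exact congrFun (hcol k) ⟨i, hi⟩
  · exact hD i hi k

/-- Lemma 2 (primal–dual witness): if `Bh` has zero rows off `S`, nonzero rows
on `S`, satisfies the stationarity condition on `S` and strict dual feasibility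
off `S`, then `Bh` is a global minimizer of the group-Lasso objective `f`, its
set of nonzero rows is exactly `S`, and if the Gram matrix of the columns of
`X` indexed by `S` is positive definite then `Bh` is the unique global
minimizer. -/
theorem group_lasso_primal_dual_witness (n p K : ℕ) (hn : 0 < n) (hp : 0 < p) (hK : 0 < K)
    (X : Matrix (Fin n) (Fin p) ℝ) (Y : Matrix (Fin n) (Fin K) ℝ)
    (lam : ℝ) (hlam : 0 < lam) (S : Finset (Fin p))
    (f : Matrix (Fin p) (Fin K) ℝ → ℝ)
    (hf : ∀ B, f B = (1 / (2 * n)) * ∑ a, ∑ k, (Y a k - (X * B) a k) ^ 2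
        + lam * ∑ i, Real.sqrt (∑ k, B i k ^ 2))
    (Bh : Matrix (Fin p) (Fin K) ℝ)
    (hoff : ∀ j ∉ S, ∀ k, Bh j k = 0)
    (hon : ∀ i ∈ S, ∃ k, Bh i k ≠ 0)
    (hstat : ∀ i ∈ S, ∀ k,
      (1 / (n : ℝ)) * (Xᵀ * (X * Bh - Y)) i k
        = -lam * Bh i k / Real.sqrt (∑ l, Bh i l ^ 2))
    (hdual : ∀ j ∉ S,
      Real.sqrt (∑ k, ((1 / (n : ℝ)) * (Xᵀ * (X * Bh - Y)) j k) ^ 2) < lam) :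
    (∀ B, f Bh ≤ f B) ∧
      {i | ∃ k, Bh i k ≠ 0} = (S : Set (Fin p)) ∧
      ((Matrix.PosDef fun (i j : {x // x ∈ S}) => ∑ a, X a i.1 * X a j.1) →
        ∀ B, B ≠ Bh → f Bh < f B) := by
  have hrow : ∀ B : Matrix (Fin p) (Fin K) ℝ, ∀ i,
      0 ≤ ∑ k, ((1 / (n : ℝ)) * (Xᵀ * (X * Bh - Y)) i k) * (B i k - Bh i k)
        + lam * (Real.sqrt (∑ k, B i k ^ 2) - Real.sqrt (∑ k, Bh i k ^ 2)) := by
    intro B i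
    by_cases hi : i ∈ S
    · exact row_nonneg_of_stat hlam _ (B i) (Bh i) (hon i hi) (hstat i hi)
    · have h := row_lower_bound K lam (fun k => (1 / (n : ℝ)) * (Xᵀ * (X * Bh - Y)) i k) (B i)
      have h' := mul_nonneg (sub_nonneg.2 (hdual i hi).le) (Real.sqrt_nonneg (∑ k, B i k ^ 2))
      simp only [hoff i hi, sub_zero, ne_eq, OfNat.ofNat_ne_zero, not_false_eq_true, zero_pow,
        Finset.sum_const_zero, Real.sqrt_zero]
      exact h'.trans h
  have hquad : ∀ B : Matrix (Fin p) (Fin K) ℝ,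
      0 ≤ (1 / (2 * (n : ℝ))) * ∑ a, ∑ k, ((X * (B - Bh)) a k) ^ 2 := fun B => by positivity
  have hsub : ∀ B, f B - f Bh = _ := fun B =>
    (congrArg₂ (· - ·) (hf B) (hf Bh)).trans (objective_sub hn X Y lam B Bh)
  have hmin : ∀ B, f Bh ≤ f B := fun B => by
    rw [← sub_nonneg, hsub]
    exact add_nonneg (hquad B) (Finset.sum_nonneg fun i _ => hrow B i)
  refine ⟨hmin, ?_, ?_⟩
  · ext i
    refine ⟨fun ⟨k, hk⟩ => ?_, fun hi => hon i hi⟩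
    by_contra hi
    exact hk (hoff i hi k)
  · intro hX B hne
    refine lt_of_le_of_ne (hmin B) fun heq => hne ?_
    -- Equal values force both nonnegative parts of the expansion to vanish.
    have h0 := (sub_eq_zero.2 heq.symm).symm.trans (hsub B)
    obtain ⟨hq0, hr0⟩ := (add_eq_zero_iff_of_nonneg (hquad B)
      (Finset.sum_nonneg fun i _ => hrow B i)).1 h0.symm
    have hXD : ∀ a k, (X * (B - Bh)) a k = 0 := by
      have hc : (1 / (2 * (n : ℝ))) ≠ 0 := by positivity
      have hs := (mul_eq_zero.1 hq0).resolve_left hc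
      intro a k
      have h1 := (Finset.sum_eq_zero_iff_of_nonneg fun a _ =>
        Finset.sum_nonneg fun k _ => sq_nonneg _).1 hs a (Finset.mem_univ a)
      have h2 := (Finset.sum_eq_zero_iff_of_nonneg fun k _ => sq_nonneg _).1 h1 k
        (Finset.mem_univ k)
      exact pow_eq_zero_iff two_ne_zero |>.1 h2
    have hBoff : ∀ j ∉ S, ∀ k, B j k = 0 := by
      intro j hj k
      have hz := (Finset.sum_eq_zero_iff_of_nonneg fun i _ => hrow B i).1 hr0 j (Finset.mem_univ j)
      simp only [hoff j hj, sub_zero, ne_eq, OfNat.ofNat_ne_zero, not_false_eq_true, zero_pow,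
        Finset.sum_const_zero, Real.sqrt_zero] at hz
      have h := row_lower_bound K lam (fun k => (1 / (n : ℝ)) * (Xᵀ * (X * Bh - Y)) j k) (B j)
      have hnorm : Real.sqrt (∑ k, B j k ^ 2) ≤ 0 :=
        nonpos_of_mul_nonpos_right (h.trans hz.le) (sub_pos.2 (hdual j hj))
      have hsq : ∑ k, B j k ^ 2 = 0 :=
        le_antisymm (Real.sqrt_eq_zero'.1 (le_antisymm hnorm (Real.sqrt_nonneg _)))
          (Finset.sum_nonneg fun _ _ => sq_nonneg _)
      exact pow_eq_zero_iff two_ne_zero |>.1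
        ((Finset.sum_eq_zero_iff_of_nonneg fun k _ => sq_nonneg _).1 hsq k (Finset.mem_univ k))
    refine sub_eq_zero.1 (eq_zero_of_gram_posDef X S hX (B - Bh) (fun j hj k => ?_) hXD)
    rw [Matrix.sub_apply, hBoff j hj, hoff j hj, sub_zero]
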